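/- arXiv:1209.4632 — 2 statements merged into one kernel-verified Lean document; each statement's English description precedes it below -/
import Mathlib

section
/- Let P(y_1,…,y_n) = ∑_{|α|≤m} a_α y^α be a real polynomial of total degree at most m, and for 0 ≤ k ≤ m let P_k(y) = ∑_{|α|=k} a_α y^α be its k-homogeneous part. Then max_{z_1,…,z_n ∈ 𝔻} |P_m(z_1,…,z_n)| ≤ 2^{m−1} · max_{x_1,…,x_n ∈ [−1,1]} |P(x_1,…,x_n)|, where 𝔻 is the closed unit disk in ℂ (Visser's inequality). -/
open MvPolynomial Filter

/-- The sup norm of a real polynomial in `n` variables over the cube `[-1,1]^n`. -/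
noncomputable def supNorm {n : ℕ} (P : MvPolynomial (Fin n) ℝ) : ℝ :=
  sSup {y : ℝ | ∃ x : Fin n → ℝ, (∀ i, |x i| ≤ 1) ∧ y = |eval x P|}

/-- The sup norm of a complex polynomial in `n` variables over the closed polydisk `𝔻^n`. -/
noncomputable def supNormC {n : ℕ} (P : MvPolynomial (Fin n) ℂ) : ℝ :=
  sSup {y : ℝ | ∃ z : Fin n → ℂ, (∀ i, ‖z i‖ ≤ 1) ∧ y = ‖eval z P‖}

/-- The `ℓ_p` norm of the coefficients of a complex polynomial. -/
noncomputable def lpNormC {n : ℕ} (p : ℝ) (P : MvPolynomial (Fin n) ℂ) : ℝ :=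
  (∑ α ∈ P.support, ‖coeff α P‖ ^ p) ^ (1 / p)

/-!
Fix `z` in the closed polydisk. On the unit circle, `wᵐ P(Re (z₁ w), …, Re (zₙ w))` is a polynomial
`Q(w)` of degree at most `2m`, since `w Re (zⱼ w) = (zⱼ w² + z̄ⱼ) / 2` there, and `|Q|` is at most
the sup norm of `P` on the real cube. Its coefficients of degree `2m` and `0` are `2⁻ᵐ P_m(z)` and
the conjugate of this number. Averaging a polynomial of degree at most `N` over the `N`-th roots of
a suitable unimodular number bounds `|a₀| + |a_N|` by its maximum on the circle; for `Q` and
`N = 2m`, with `m > 0`, this is the claim.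
-/

section Univariate

lemma sum_range_pow_pow_of_isPrimitiveRoot {R : Type*} [CommRing R] [IsDomain R] {ζ : R} {N : ℕ}
    (hζ : IsPrimitiveRoot ζ N) (j : ℕ) :
    ∑ k ∈ Finset.range N, (ζ ^ j) ^ k = if N ∣ j then (N : R) else 0 := by
  split_ifs with hj
  · simp [(hζ.pow_eq_one_iff_dvd j).2 hj]
  · have hne : ζ ^ j - 1 ≠ 0 := sub_ne_zero.2 (mt (hζ.pow_eq_one_iff_dvd j).1 hj)
    refine (mul_eq_zero.1 ?_).resolve_right hne
    rw [geom_sum_mul, pow_right_comm, hζ.pow_eq_one, one_pow, sub_self]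

lemma sum_eval_pow_mul_of_isPrimitiveRoot {R : Type*} [CommRing R] [IsDomain R] {ζ : R} {N : ℕ}
    (hζ : IsPrimitiveRoot ζ N) {p : Polynomial R} (hp : p.natDegree ≤ N) (w : R) :
    ∑ k ∈ Finset.range N, p.eval (ζ ^ k * w) = N * (p.coeff 0 + p.coeff N * w ^ N) := by
  obtain rfl | hN := N.eq_zero_or_pos
  · simp
  have eval_eq (k : ℕ) : p.eval (ζ ^ k * w) =
      ∑ j ∈ Finset.range (N + 1), p.coeff j * w ^ j * (ζ ^ j) ^ k := by
    rw [Polynomial.eval_eq_sum_range' (Nat.lt_succ_of_le hp)]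
    exact Finset.sum_congr rfl fun j _ ↦ by ring
  simp_rw [eval_eq]
  rw [Finset.sum_comm]
  simp_rw [← Finset.mul_sum, sum_range_pow_pow_of_isPrimitiveRoot hζ]
  have interior (j : ℕ) (hj : j ∈ Finset.Ioo 0 N) :
      p.coeff j * w ^ j * (if N ∣ j then (N : R) else 0) = 0 := by
    obtain ⟨hj₀, hjN⟩ := Finset.mem_Ioo.1 hj
    rw [if_neg (Nat.not_dvd_of_pos_of_lt hj₀ hjN), mul_zero]
  rw [Finset.sum_range_succ, Finset.range_eq_Ico, ← Finset.Ioo_insert_left hN,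
    Finset.sum_insert Finset.left_notMem_Ioo, Finset.sum_eq_zero interior]
  simp only [dvd_zero, dvd_refl, if_true, pow_zero]
  ring

lemma exists_norm_eq_one_norm_add_mul_eq (a b : ℂ) :
    ∃ u : ℂ, ‖u‖ = 1 ∧ ‖a + b * u‖ = ‖a‖ + ‖b‖ := by
  obtain ⟨c, hc, hca⟩ := Complex.exists_norm_mul_eq_self a
  obtain ⟨d, hd, hdb⟩ := Complex.exists_norm_eq_mul_self b
  refine ⟨d * c, by simp [hc, hd], ?_⟩
  have aligned : a + b * (d * c) = c * ((‖a‖ + ‖b‖ : ℝ) : ℂ) := by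
    push_cast
    linear_combination -hca - c * hdb
  rw [aligned, norm_mul, hc, one_mul, Complex.norm_of_nonneg (by positivity)]

lemma norm_coeff_zero_add_norm_coeff_le {p : Polynomial ℂ} {N : ℕ} (hN : N ≠ 0)
    (hp : p.natDegree ≤ N) {M : ℝ} (hM : ∀ w : ℂ, ‖w‖ = 1 → ‖p.eval w‖ ≤ M) :
    ‖p.coeff 0‖ + ‖p.coeff N‖ ≤ M := by
  obtain ⟨u, hu, hsum⟩ := exists_norm_eq_one_norm_add_mul_eq (p.coeff 0) (p.coeff N)
  obtain ⟨w, rfl⟩ := IsAlgClosed.exists_pow_nat_eq u (Nat.pos_of_ne_zero hN)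
  have hw : ‖w‖ = 1 := by
    rwa [norm_pow, pow_eq_one_iff_of_nonneg (norm_nonneg w) hN] at hu
  have hζ := Complex.isPrimitiveRoot_exp N hN
  set ζ := Complex.exp (2 * Real.pi * Complex.I / N)
  have hζ_norm : ‖ζ‖ = 1 := hζ.norm'_eq_one hN
  have hN_pos : (0 : ℝ) < N := by positivity
  refine le_of_mul_le_mul_left ?_ hN_pos
  calc (N : ℝ) * (‖p.coeff 0‖ + ‖p.coeff N‖)
      = ‖∑ k ∈ Finset.range N, p.eval (ζ ^ k * w)‖ := by
        rw [sum_eval_pow_mul_of_isPrimitiveRoot hζ hp, norm_mul, Complex.norm_natCast, hsum]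
    _ ≤ ∑ k ∈ Finset.range N, ‖p.eval (ζ ^ k * w)‖ := norm_sum_le _ _
    _ ≤ ∑ _k ∈ Finset.range N, M :=
        Finset.sum_le_sum fun k _ ↦ hM _ (by simp [hζ_norm, hw])
    _ = N * M := by simp

end Univariate

section Homogenization

variable {σ R A : Type*} [CommSemiring R] [CommSemiring A] [Algebra R A]

lemma aeval_smul_of_isHomogeneous {F : MvPolynomial σ R} {m : ℕ} (hF : F.IsHomogeneous m)
    (t : A) (x : σ → A) : aeval (t • x) F = t ^ m * aeval x F := by
  simp only [aeval_def, eval₂_eq, Pi.smul_apply, smul_eq_mul, mul_pow, Finset.prod_mul_distrib,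
    Finset.mul_sum]
  refine Finset.sum_congr rfl fun d hd ↦ ?_
  rw [Finset.prod_pow_eq_pow_sum, ← hF.degree_eq_sum_deg_support hd]
  ring

lemma aeval_div_of_isHomogeneous {K : Type*} [Semifield K] [Algebra R K] {F : MvPolynomial σ R}
    {m : ℕ} (hF : F.IsHomogeneous m) (x : σ → K) (c : K) :
    aeval (fun j ↦ x j / c) F = aeval x F / c ^ m := by
  have div_eq_smul : (fun j ↦ x j / c) = c⁻¹ • x := funext fun j ↦ div_eq_inv_mul (x j) c
  rw [div_eq_smul, aeval_smul_of_isHomogeneous hF, inv_pow, div_eq_inv_mul]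

lemma eval_aeval (F : MvPolynomial σ R) (f : σ → Polynomial A) (w : A) :
    (aeval f F).eval w = aeval (fun i ↦ (f i).eval w) F := by
  simpa [Polynomial.coe_aeval_eq_eval] using
    comp_aeval_apply f ((Polynomial.aeval w : Polynomial A →ₐ[A] A).restrictScalars R) F

lemma natDegree_aeval_le_of_isHomogeneous {F : MvPolynomial σ R} {m n : ℕ}
    (hF : F.IsHomogeneous m) {f : σ → Polynomial A} (hf : ∀ i, (f i).natDegree ≤ n) :
    (aeval f F).natDegree ≤ m * n := by
  rw [← aeval_map_algebraMap A]
  exact aeval_natDegree_le _ (hF.map _).totalDegree_le f hf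

lemma coeff_prod_pow_of_natDegree_le (s : Finset σ) (f : σ → Polynomial A) (d : σ → ℕ) {n : ℕ}
    (hf : ∀ i ∈ s, (f i).natDegree ≤ n) :
    (∏ i ∈ s, f i ^ d i).coeff ((∑ i ∈ s, d i) * n) = ∏ i ∈ s, (f i).coeff n ^ d i := by
  have h := Polynomial.coeff_prod_of_natDegree_le (s.sigma fun i ↦ Finset.range (d i))
    (fun i ↦ f i.1) n fun i hi ↦ hf i.1 (Finset.mem_sigma.1 hi).1
  simpa only [Finset.prod_sigma, Finset.prod_const, Finset.card_sigma, Finset.card_range] using h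

lemma coeff_aeval_of_isHomogeneous {F : MvPolynomial σ R} {m n : ℕ}
    (hF : F.IsHomogeneous m) {f : σ → Polynomial A} (hf : ∀ i, (f i).natDegree ≤ n) :
    (aeval f F).coeff (m * n) = aeval (fun i ↦ (f i).coeff n) F := by
  simp only [aeval_def, eval₂_eq, Polynomial.finsetSum_coeff]
  refine Finset.sum_congr rfl fun d hd ↦ ?_
  rw [IsScalarTower.algebraMap_apply R A (Polynomial A), Polynomial.algebraMap_eq,
    Polynomial.coeff_C_mul, hF.degree_eq_sum_deg_support hd,
    coeff_prod_pow_of_natDegree_le d.support f d fun i _ ↦ hf i]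

/-- The homogenization `x₀ᵐ P(x / x₀)` of `P` in degree `m`, with `none` indexing the extra
variable `x₀`; the components of `P` of degree above `m` are discarded. -/
noncomputable def homogenization (m : ℕ) (P : MvPolynomial σ R) : MvPolynomial (Option σ) R :=
  ∑ k ∈ Finset.range (m + 1), X none ^ (m - k) * rename some (homogeneousComponent k P)

lemma isHomogeneous_homogenization (m : ℕ) (P : MvPolynomial σ R) :
    (homogenization m P).IsHomogeneous m := by
  refine IsHomogeneous.sum _ _ _ fun k hk ↦ ?_
  have h := (isHomogeneous_X_pow (R := R) none (m - k)).mul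
    ((homogeneousComponent_isHomogeneous k P).rename_isHomogeneous (f := some))
  rwa [Nat.sub_add_cancel (Finset.mem_range_succ_iff.1 hk)] at h

lemma aeval_homogenization (m : ℕ) (P : MvPolynomial σ R) (x : Option σ → A) :
    aeval x (homogenization m P) = ∑ k ∈ Finset.range (m + 1),
      x none ^ (m - k) * aeval (x ∘ some) (homogeneousComponent k P) := by
  simp only [homogenization, map_sum, map_mul, map_pow, aeval_X, aeval_rename]

lemma aeval_homogenization_of_none_eq_zero (m : ℕ) (P : MvPolynomial σ R) {x : Option σ → A}
    (hx : x none = 0) :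
    aeval x (homogenization m P) = aeval (x ∘ some) (homogeneousComponent m P) := by
  rw [aeval_homogenization, Finset.sum_range_succ, Finset.sum_eq_zero]
  · simp
  · intro k hk
    rw [hx, zero_pow (Nat.sub_ne_zero_of_lt (Finset.mem_range.1 hk)), zero_mul]

lemma sum_range_homogeneousComponent_of_totalDegree_le {m : ℕ} {P : MvPolynomial σ R}
    (hP : P.totalDegree ≤ m) : ∑ k ∈ Finset.range (m + 1), homogeneousComponent k P = P := by
  conv_rhs => rw [← sum_homogeneousComponent P]
  refine (Finset.sum_subset (by simpa using hP) fun k _ hk ↦ ?_).symm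
  exact homogeneousComponent_eq_zero k P (by simpa using hk)

lemma aeval_homogenization_elim_smul {m : ℕ} {P : MvPolynomial σ R} (hP : P.totalDegree ≤ m)
    (t : A) (x : σ → A) :
    aeval (fun i ↦ i.elim t (t • x)) (homogenization m P) = t ^ m * aeval x P := by
  rw [aeval_homogenization]
  conv_rhs => rw [← sum_range_homogeneousComponent_of_totalDegree_le hP, map_sum, Finset.mul_sum]
  refine Finset.sum_congr rfl fun k hk ↦ ?_
  have elim_comp_some : (fun i : Option σ ↦ i.elim t (t • x)) ∘ some = t • x := rfl
  rw [elim_comp_some, Option.elim_none,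
    aeval_smul_of_isHomogeneous (homogeneousComponent_isHomogeneous k P), ← mul_assoc, ← pow_add,
    Nat.sub_add_cancel (Finset.mem_range_succ_iff.1 hk)]

end Homogenization

section Circle

open scoped Polynomial ComplexConjugate

variable {σ : Type*}

/-- The substitution `x₀ = w`, `xⱼ = (zⱼ w² + z̄ⱼ) / 2` of polynomials in `w`, with `none` indexing
`x₀`. On the unit circle `xⱼ = w Re (zⱼ w)`, as `w̄ = w⁻¹` there. -/
noncomputable def circleSubstitution (z : σ → ℂ) : Option σ → ℂ[X]
  | none => .X
  | some j => .C (z j / 2) * .X ^ 2 + .C (conj (z j) / 2)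

/-- The polynomial in `w` that equals `wᵐ P(Re (z₁ w), …, Re (zₙ w))` on the unit circle when `P`
has total degree at most `m`. -/
noncomputable def circlePolynomial (m : ℕ) (P : MvPolynomial σ ℝ) (z : σ → ℂ) : ℂ[X] :=
  aeval (circleSubstitution z) (homogenization m P)

lemma natDegree_circleSubstitution_le (z : σ → ℂ) :
    ∀ i, (circleSubstitution z i).natDegree ≤ 2
  | none => Polynomial.natDegree_X_le.trans one_le_two
  | some j => by rw [circleSubstitution]; compute_degree

lemma natDegree_circlePolynomial_le (m : ℕ) (P : MvPolynomial σ ℝ) (z : σ → ℂ) :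
    (circlePolynomial m P z).natDegree ≤ m * 2 :=
  natDegree_aeval_le_of_isHomogeneous (isHomogeneous_homogenization m P)
    (natDegree_circleSubstitution_le z)

lemma aeval_conj (F : MvPolynomial σ ℝ) (z : σ → ℂ) :
    aeval (fun j ↦ conj (z j)) F = conj (aeval z F) :=
  (comp_aeval_apply z Complex.conjAe.toAlgHom F).symm

lemma coeff_mul_two_circlePolynomial (m : ℕ) (P : MvPolynomial σ ℝ) (z : σ → ℂ) :
    (circlePolynomial m P z).coeff (m * 2) =
      aeval z (homogeneousComponent m P) / 2 ^ m := by
  rw [circlePolynomial, coeff_aeval_of_isHomogeneous (isHomogeneous_homogenization m P)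
    (natDegree_circleSubstitution_le z), aeval_homogenization_of_none_eq_zero _ _
    (by simp [circleSubstitution, Polynomial.coeff_X]),
    ← aeval_div_of_isHomogeneous (homogeneousComponent_isHomogeneous m P)]
  congr 2
  ext1 j
  simp [circleSubstitution]

lemma coeff_zero_circlePolynomial (m : ℕ) (P : MvPolynomial σ ℝ) (z : σ → ℂ) :
    (circlePolynomial m P z).coeff 0 =
      conj (aeval z (homogeneousComponent m P)) / 2 ^ m := by
  rw [Polynomial.coeff_zero_eq_eval_zero, circlePolynomial, eval_aeval,
    aeval_homogenization_of_none_eq_zero _ _ (by simp [circleSubstitution]), ← aeval_conj,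
    ← aeval_div_of_isHomogeneous (homogeneousComponent_isHomogeneous m P)]
  congr 2
  ext1 j
  simp [circleSubstitution]

lemma eval_circleSubstitution_of_norm_eq_one (z : σ → ℂ) {w : ℂ} (hw : ‖w‖ = 1) (i : Option σ) :
    (circleSubstitution z i).eval w = i.elim w (w • fun j ↦ ((z j * w).re : ℂ)) := by
  have hww : w * conj w = 1 := by simp [Complex.mul_conj', hw]
  cases i with
  | none => simp [circleSubstitution]
  | some j =>
    simp only [circleSubstitution, Polynomial.eval_add, Polynomial.eval_mul, Polynomial.eval_C,
      Polynomial.eval_pow, Polynomial.eval_X, Option.elim_some, Pi.smul_apply, smul_eq_mul,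
      Complex.re_eq_add_conj, map_mul]
    linear_combination -(conj (z j) / 2) * hww

lemma eval_circlePolynomial_of_norm_eq_one {m : ℕ} {P : MvPolynomial σ ℝ}
    (hP : P.totalDegree ≤ m) (z : σ → ℂ) {w : ℂ} (hw : ‖w‖ = 1) :
    (circlePolynomial m P z).eval w = w ^ m * (eval (fun j ↦ (z j * w).re) P : ℝ) := by
  have hcast : ((eval (fun j ↦ (z j * w).re) P : ℝ) : ℂ) =
      aeval (fun j ↦ ((z j * w).re : ℂ)) P :=
    (aeval_algebraMap_apply ℂ (fun j ↦ (z j * w).re) P).symm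
  simp only [circlePolynomial, eval_aeval, eval_circleSubstitution_of_norm_eq_one z hw, hcast,
    aeval_homogenization_elim_smul hP]

lemma norm_eval_circlePolynomial_le {m : ℕ} {P : MvPolynomial σ ℝ} (hP : P.totalDegree ≤ m)
    {M : ℝ} (hM : ∀ x : σ → ℝ, (∀ i, |x i| ≤ 1) → |eval x P| ≤ M)
    {z : σ → ℂ} (hz : ∀ i, ‖z i‖ ≤ 1) {w : ℂ} (hw : ‖w‖ = 1) :
    ‖(circlePolynomial m P z).eval w‖ ≤ M := by
  rw [eval_circlePolynomial_of_norm_eq_one hP z hw, norm_mul, norm_pow, hw, one_pow, one_mul,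
    Complex.norm_real]
  refine hM _ fun j ↦ (Complex.abs_re_le_norm _).trans ?_
  rw [norm_mul, hw, mul_one]
  exact hz j

theorem visser_inequality_general {m : ℕ} {P : MvPolynomial σ ℝ} (hP : P.totalDegree ≤ m)
    {M : ℝ} (hM : ∀ x : σ → ℝ, (∀ i, |x i| ≤ 1) → |eval x P| ≤ M)
    {z : σ → ℂ} (hz : ∀ i, ‖z i‖ ≤ 1) :
    ‖aeval z (homogeneousComponent m P)‖ ≤ 2 ^ (m - 1) * M := by
  cases m with
  | zero => simpa [eval_zero, constantCoeff_eq] using hM 0 (by simp)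
  | succ k =>
    set a := ‖aeval z (homogeneousComponent (k + 1) P)‖ with ha
    have hcoeff := norm_coeff_zero_add_norm_coeff_le (by omega)
      (natDegree_circlePolynomial_le (k + 1) P z)
      fun w hw ↦ norm_eval_circlePolynomial_le hP hM hz hw
    rw [coeff_zero_circlePolynomial, coeff_mul_two_circlePolynomial, norm_div, norm_div,
      RCLike.norm_conj, ← ha, norm_pow, RCLike.norm_ofNat] at hcoeff
    calc a = 2 ^ k * (a / 2 ^ (k + 1) + a / 2 ^ (k + 1)) := by
          field_simp
          ring
      _ ≤ 2 ^ (k + 1 - 1) * M := by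
          rw [Nat.add_sub_cancel]
          gcongr

end Circle

lemma abs_eval_le_supNorm {n : ℕ} (P : MvPolynomial (Fin n) ℝ) {x : Fin n → ℝ}
    (hx : ∀ i, |x i| ≤ 1) : |eval x P| ≤ supNorm P := by
  have hbdd := (isCompact_closedBall (0 : Fin n → ℝ) 1).bddAbove_image
    (continuous_eval P).abs.continuousOn
  refine le_csSup (hbdd.mono ?_) ⟨x, hx, rfl⟩
  rintro _ ⟨y, hy, rfl⟩
  exact ⟨y, by simpa [pi_norm_le_iff_of_nonneg] using hy, rfl⟩

/-- Visser's inequality: if `P` is a real polynomial in `n` variables of total degree at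
most `m` and `P_m` is its `m`-homogeneous part, then
`max_{z ∈ 𝔻^n} |P_m(z)| ≤ 2^{m-1} · max_{x ∈ [-1,1]^n} |P(x)|`. -/
theorem visser_inequality (n m : ℕ) (P : MvPolynomial (Fin n) ℝ)
    (hP : P.totalDegree ≤ m) :
    supNormC (map (algebraMap ℝ ℂ) (homogeneousComponent m P)) ≤ 2 ^ (m - 1) * supNorm P := by
  refine csSup_le ⟨_, 0, by simp, rfl⟩ ?_
  rintro _ ⟨z, hz, rfl⟩
  simpa only [eval_map, aeval_def] using
    visser_inequality_general hP (fun _ ↦ abs_eval_le_supNorm P) hz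
end

section
/- Fix n ≥ 2. For every m-homogeneous polynomial P in n complex variables, |P|_{2m/(m+1)} ≤ C(m+n−1, n−1)^{1/(2m)} · ‖P‖, where C(·,·) is the binomial coefficient, |P|_p is the ℓ_p norm of the coefficients of P and ‖P‖ = sup{|P(z)| : z ∈ 𝔻^n}. -/
open MvPolynomial Filter

/-!
Let `M` exceed every partial degree of `P`. On the grid of `M`-th roots of unity distinct monomials
of `P` are orthogonal, so the mean of `|P|²` over this grid is `∑ |c_α|²`; as the grid lies in the
polydisk, `|P|_2 ≤ ‖P‖`. The power mean inequality over the support of `P` then gives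
`|P|_p ≤ N ^ (1 / p - 1 / 2) ‖P‖` for `0 < p ≤ 2`, where `N` is the number of monomials of
degree `m`, and `1 / p - 1 / 2 = 1 / (2 m)` for `p = 2 m / (m + 1)`.
-/

lemma rpow_sum_rpow_le_card_rpow_mul_rpow_sum_rpow {ι : Type*} (s : Finset ι)
    {f : ι → ℝ} (hf : ∀ i ∈ s, 0 ≤ f i) {p q : ℝ} (hp : 0 < p) (hpq : p ≤ q) :
    (∑ i ∈ s, f i ^ p) ^ (1 / p) ≤
      (s.card : ℝ) ^ (1 / p - 1 / q) * (∑ i ∈ s, f i ^ q) ^ (1 / q) := by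
  have hq : 0 < q := hp.trans_le hpq
  have hsum (r : ℝ) : 0 ≤ ∑ i ∈ s, f i ^ r :=
    Finset.sum_nonneg fun i hi ↦ Real.rpow_nonneg (hf i hi) r
  have power_mean : (∑ i ∈ s, f i ^ p) ^ (q / p) ≤
      (s.card : ℝ) ^ (q / p - 1) * ∑ i ∈ s, f i ^ q := by
    refine (Real.rpow_sum_le_const_mul_sum_rpow_of_nonneg s ((one_le_div hp).mpr hpq)
      fun i hi ↦ Real.rpow_nonneg (hf i hi) p).trans_eq ?_
    congr 1
    refine Finset.sum_congr rfl fun i hi ↦ ?_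
    rw [← Real.rpow_mul (hf i hi), mul_div_cancel₀ q hp.ne']
  calc (∑ i ∈ s, f i ^ p) ^ (1 / p)
      = ((∑ i ∈ s, f i ^ p) ^ (q / p)) ^ (1 / q) := by
        rw [← Real.rpow_mul (hsum p)]
        congr 1
        field_simp
    _ ≤ ((s.card : ℝ) ^ (q / p - 1) * ∑ i ∈ s, f i ^ q) ^ (1 / q) :=
        Real.rpow_le_rpow (Real.rpow_nonneg (hsum p) _) power_mean (by positivity)
    _ = (s.card : ℝ) ^ (1 / p - 1 / q) * (∑ i ∈ s, f i ^ q) ^ (1 / q) := by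
        rw [Real.mul_rpow (by positivity) (hsum q), ← Real.rpow_mul (by positivity)]
        congr 2
        field_simp

section Parseval

open ComplexConjugate

variable {σ : Type*} [Fintype σ] [DecidableEq σ]

lemma sum_prod_addChar_mulShift {R R' : Type*} [CommRing R] [Fintype R] [DecidableEq R]
    [CommRing R'] [IsDomain R'] {ψ : AddChar R R'} (hψ : ψ.IsPrimitive) (b : σ → R) :
    ∑ k : σ → R, ∏ i, ψ (k i * b i) =
      if b = 0 then (Fintype.card R : R') ^ Fintype.card σ else 0 := by
  rw [← Fintype.prod_sum fun i x ↦ ψ (x * b i)]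
  simp_rw [AddChar.sum_mulShift _ hψ]
  split_ifs with hb
  · simp [hb]
  · obtain ⟨i, hi⟩ := Function.ne_iff.mp hb
    exact Finset.prod_eq_zero (Finset.mem_univ i) (by simp [show b i ≠ 0 from hi])

variable {M : ℕ} [NeZero M] {ψ : AddChar (ZMod M) ℂ}

lemma sum_prod_addChar_pow_mul_conj (hψ : ψ.IsPrimitive) {α β : σ →₀ ℕ}
    (hα : ∀ i, α i < M) (hβ : ∀ i, β i < M) :
    ∑ k : σ → ZMod M, (∏ i, ψ (k i) ^ α i) * conj (∏ i, ψ (k i) ^ β i) =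
      if α = β then (M : ℂ) ^ Fintype.card σ else 0 := by
  have hterm (k : σ → ZMod M) : (∏ i, ψ (k i) ^ α i) * conj (∏ i, ψ (k i) ^ β i) =
      ∏ i, ψ (k i * ((α i : ZMod M) - β i)) := by
    rw [map_prod, ← Finset.prod_mul_distrib]
    refine Finset.prod_congr rfl fun i _ ↦ ?_
    rw [map_pow, ← AddChar.map_neg_eq_conj, ← AddChar.map_nsmul_eq_pow,
      ← AddChar.map_nsmul_eq_pow, ← AddChar.map_add_eq_mul, nsmul_eq_mul, nsmul_eq_mul]
    ring_nf
  have hdiff : (fun i ↦ (α i : ZMod M) - β i) = 0 ↔ α = β := by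
    simp only [_root_.funext_iff, Pi.zero_apply, sub_eq_zero, ZMod.natCast_eq_natCast_iff',
      Nat.mod_eq_of_lt (hα _), Nat.mod_eq_of_lt (hβ _), Finsupp.ext_iff]
  simp_rw [hterm, sum_prod_addChar_mulShift hψ, hdiff, ZMod.card]

lemma sum_norm_eval_addChar_sq (hψ : ψ.IsPrimitive) (P : MvPolynomial σ ℂ)
    (hP : ∀ i, P.degreeOf i < M) :
    ∑ k : σ → ZMod M, ‖eval (fun i ↦ ψ (k i)) P‖ ^ 2 =
      (M : ℝ) ^ Fintype.card σ * ∑ α ∈ P.support, ‖coeff α P‖ ^ 2 := by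
  have hlt {α : σ →₀ ℕ} (hα : α ∈ P.support) (i : σ) : α i < M :=
    (monomial_le_degreeOf i hα).trans_lt (hP i)
  have hpair {α β : σ →₀ ℕ} (hα : α ∈ P.support) (hβ : β ∈ P.support) :
      ∑ k : σ → ZMod M,
        (coeff α P * ∏ i, ψ (k i) ^ α i) * conj (coeff β P * ∏ i, ψ (k i) ^ β i) =
      if α = β then (M : ℂ) ^ Fintype.card σ * (coeff α P * conj (coeff β P)) else 0 := by
    simp_rw [map_mul, mul_mul_mul_comm]
    rw [← Finset.mul_sum, sum_prod_addChar_pow_mul_conj hψ (hlt hα) (hlt hβ), mul_ite, mul_zero,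
      mul_comm]
  apply Complex.ofReal_injective
  push_cast
  simp_rw [← Complex.mul_conj', eval_eq', map_sum, Finset.sum_mul_sum]
  rw [Finset.sum_comm, Finset.mul_sum]
  refine Finset.sum_congr rfl fun α hα ↦ ?_
  rw [Finset.sum_comm, Finset.sum_congr rfl fun β hβ ↦ hpair hα hβ, Finset.sum_ite_eq, if_pos hα]

end Parseval

lemma card_support_le_multichoose_of_isHomogeneous {σ R : Type*} [Fintype σ] [CommSemiring R]
    {m : ℕ} {P : MvPolynomial σ R} (hP : P.IsHomogeneous m) :
    P.support.card ≤ (Fintype.card σ).multichoose m := by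
  classical
  have hsupport : P.support ⊆ Finset.finsuppAntidiag Finset.univ m := fun α hα ↦
    Finset.mem_finsuppAntidiag.mpr
      ⟨by rw [← Finsupp.degree_eq_sum, Finsupp.degree_apply, hP.degree_eq_sum_deg_support hα],
        Finset.subset_univ _⟩
  calc P.support.card ≤ (Finset.finsuppAntidiag (Finset.univ : Finset σ) m).card :=
        Finset.card_le_card hsupport
    _ = (Fintype.card σ).multichoose m := by
        rw [Finset.card_finsuppAntidiag_nat_eq_choose, Finset.card_univ, Nat.multichoose_eq]

lemma norm_eval_le_sum_norm_coeff {σ : Type*} (P : MvPolynomial σ ℂ) {z : σ → ℂ}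
    (hz : ∀ i, ‖z i‖ ≤ 1) : ‖eval z P‖ ≤ ∑ α ∈ P.support, ‖coeff α P‖ := by
  rw [eval_eq]
  refine norm_sum_le_of_le _ fun α _ ↦ ?_
  rw [norm_mul, norm_prod]
  refine mul_le_of_le_one_right (norm_nonneg _)
    (Finset.prod_le_one (fun i _ ↦ norm_nonneg _) fun i _ ↦ ?_)
  rw [norm_pow]
  exact pow_le_one₀ (norm_nonneg _) (hz i)

section Polydisk

variable {n : ℕ}

lemma norm_eval_le_supNormC (P : MvPolynomial (Fin n) ℂ) {z : Fin n → ℂ}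
    (hz : ∀ i, ‖z i‖ ≤ 1) : ‖eval z P‖ ≤ supNormC P := by
  refine le_csSup ⟨∑ α ∈ P.support, ‖coeff α P‖, ?_⟩ ⟨z, hz, rfl⟩
  rintro _ ⟨w, hw, rfl⟩
  exact norm_eval_le_sum_norm_coeff P hw

lemma supNormC_nonneg (P : MvPolynomial (Fin n) ℂ) : 0 ≤ supNormC P :=
  (norm_nonneg _).trans (norm_eval_le_supNormC P (z := 0) (by simp))

lemma sum_norm_coeff_sq_le_supNormC_sq (P : MvPolynomial (Fin n) ℂ) :
    ∑ α ∈ P.support, ‖coeff α P‖ ^ 2 ≤ supNormC P ^ 2 := by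
  let M := P.totalDegree + 1
  let ψ : AddChar (ZMod M) ℂ := ZMod.stdAddChar
  have hM : (0 : ℝ) < (M : ℝ) ^ n := by positivity
  refine le_of_mul_le_mul_left ?_ hM
  calc (M : ℝ) ^ n * ∑ α ∈ P.support, ‖coeff α P‖ ^ 2
      = ∑ k : Fin n → ZMod M, ‖eval (fun i ↦ ψ (k i)) P‖ ^ 2 := by
        rw [sum_norm_eval_addChar_sq (ZMod.isPrimitive_stdAddChar M) P fun i ↦
          Nat.lt_succ_of_le (degreeOf_le_totalDegree P i), Fintype.card_fin]
    _ ≤ ∑ _k : Fin n → ZMod M, supNormC P ^ 2 := by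
        gcongr with k
        exact norm_eval_le_supNormC P fun i ↦ (ψ.norm_apply (k i)).le
    _ = (M : ℝ) ^ n * supNormC P ^ 2 := by
        simp only [Finset.sum_const, Finset.card_univ, Fintype.card_pi, ZMod.card,
          Finset.prod_const, Fintype.card_fin, nsmul_eq_mul, Nat.cast_pow]

lemma lpNormC_two_le_supNormC (P : MvPolynomial (Fin n) ℂ) : lpNormC 2 P ≤ supNormC P := by
  simp only [lpNormC, Real.rpow_two, ← Real.sqrt_eq_rpow]
  exact Real.sqrt_le_iff.mpr ⟨supNormC_nonneg P, sum_norm_coeff_sq_le_supNormC_sq P⟩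

lemma lpNormC_le_card_support_rpow_mul_lpNormC (P : MvPolynomial (Fin n) ℂ) {p q : ℝ}
    (hp : 0 < p) (hpq : p ≤ q) :
    lpNormC p P ≤ (P.support.card : ℝ) ^ (1 / p - 1 / q) * lpNormC q P :=
  rpow_sum_rpow_le_card_rpow_mul_rpow_sum_rpow P.support (fun _ _ ↦ norm_nonneg _) hp hpq

end Polydisk

lemma multichoose_eq_choose_sub_one {n : ℕ} (hn : n ≠ 0) (m : ℕ) :
    n.multichoose m = (m + n - 1).choose (n - 1) := by
  rw [Nat.multichoose_eq, add_comm n m]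
  exact Nat.choose_symm_of_eq_add (by omega)

lemma one_div_two_mul_div_add_one_sub_half {x : ℝ} (hx : 0 < x) :
    1 / (2 * x / (x + 1)) - 1 / 2 = 1 / (2 * x) := by
  field_simp
  ring

theorem complex_BH_fixed_dim_general {n m : ℕ} {P : MvPolynomial (Fin n) ℂ}
    (hP : P.IsHomogeneous m) {p : ℝ} (hp : 0 < p) (hp2 : p ≤ 2) :
    lpNormC p P ≤ (n.multichoose m : ℝ) ^ (1 / p - 1 / 2) * supNormC P := by
  have hcard : P.support.card ≤ n.multichoose m := by
    simpa only [Fintype.card_fin] using card_support_le_multichoose_of_isHomogeneous hP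
  have hexp : 0 ≤ 1 / p - 1 / 2 := sub_nonneg.mpr (one_div_le_one_div_of_le hp hp2)
  calc lpNormC p P ≤ (P.support.card : ℝ) ^ (1 / p - 1 / 2) * lpNormC 2 P :=
        lpNormC_le_card_support_rpow_mul_lpNormC P hp hp2
    _ ≤ (P.support.card : ℝ) ^ (1 / p - 1 / 2) * supNormC P := by
        gcongr
        exact lpNormC_two_le_supNormC P
    _ ≤ (n.multichoose m : ℝ) ^ (1 / p - 1 / 2) * supNormC P := by
        have := supNormC_nonneg P
        gcongr

/-- For fixed `n ≥ 2`: every `m`-homogeneous polynomial `P` in `n` complex variables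
satisfies `|P|_{2m/(m+1)} ≤ C(m+n-1, n-1)^{1/(2m)} · ‖P‖`. -/
theorem complex_BH_fixed_dim (n : ℕ) (hn : 2 ≤ n) (m : ℕ) (hm : 0 < m)
    (P : MvPolynomial (Fin n) ℂ) (hP : P.IsHomogeneous m) :
    lpNormC (2 * m / (m + 1)) P ≤
      (Nat.choose (m + n - 1) (n - 1) : ℝ) ^ (1 / (2 * (m : ℝ))) * supNormC P := by
  rw [← multichoose_eq_choose_sub_one (by omega),
    ← one_div_two_mul_div_add_one_sub_half (Nat.cast_pos.mpr hm)]
  exact complex_BH_fixed_dim_general hP (by positivity)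
    ((div_le_iff₀ (by positivity)).mpr (by linarith))
end
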